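/- For any pair (X^a u, Y^b v) ∈ Deriv(𝒫_𝒞) (with X, Y ∈ 𝒱_i, a, b ∈ {⊕,⊖}, u, v ∈ Σ*), the pair (Y^{⊖·b} v, X^{⊖·a} u) also belongs to Deriv(𝒫_𝒞). -/

import Mathlib

/-- The two-element sign monoid `{⊕, ⊖}` of variances. -/
inductive Sign : Type where
  | pos
  | neg
deriving DecidableEq, Repr

/-- Multiplication in the sign monoid (`⊕` is the identity, `⊖ · ⊖ = ⊕`). -/
def Sign.mul : Sign → Sign → Sign
  | .pos, s => s
  | .neg, .pos => .neg
  | .neg, .neg => .pos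

/-- Variance of a word in `Σ*`: `⟨ε⟩ = ⊕`, `⟨xw⟩ = ⟨x⟩·⟨w⟩`. -/
def wordSign {L : Type} (sgn : L → Sign) : List L → Sign
  | [] => .pos
  | x :: w => (sgn x).mul (wordSign sgn w)

/-- A derived type variable `α.w` with base type variable `α ∈ 𝒱` and word `w ∈ Σ*`. -/
structure DTV (V L : Type) : Type where
  base : V
  word : List L

/-- Appending a single field label to a derived type variable: `α.ℓ`. -/
def DTV.app {V L : Type} (α : DTV V L) (ℓ : L) : DTV V L :=
  ⟨α.base, α.word ++ [ℓ]⟩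

/-- A constraint: either `VAR X` or `X ⊑ Y` for derived type variables. -/
inductive Constraint (V L : Type) : Type where
  | var : DTV V L → Constraint V L
  | sub : DTV V L → DTV V L → Constraint V L

/-- Entailment `𝒞 ⊢ c`: the least relation containing `𝒞` and closed under the
deduction rules T-Left, T-Right, T-InheritL, T-InheritR, T-Prefix, S-Refl,
S-Trans, S-Field⊕, S-Field⊖ and S-Pointer. -/
inductive Entails {V L : Type} (sgn : L → Sign) (load store : L)
    (C : Set (Constraint V L)) : Constraint V L → Prop where
  | ax {c} : c ∈ C → Entails sgn load store C c
  | tLeft {α β} : Entails sgn load store C (.sub α β) →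
      Entails sgn load store C (.var α)
  | tRight {α β} : Entails sgn load store C (.sub α β) →
      Entails sgn load store C (.var β)
  | tInheritL {α β : DTV V L} {ℓ} : Entails sgn load store C (.sub α β) →
      Entails sgn load store C (.var (α.app ℓ)) →
      Entails sgn load store C (.var (β.app ℓ))
  | tInheritR {α β : DTV V L} {ℓ} : Entails sgn load store C (.sub α β) →
      Entails sgn load store C (.var (β.app ℓ)) →
      Entails sgn load store C (.var (α.app ℓ))
  | tPrefix {α : DTV V L} {ℓ} : Entails sgn load store C (.var (α.app ℓ)) →
      Entails sgn load store C (.var α)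
  | sRefl {α} : Entails sgn load store C (.var α) →
      Entails sgn load store C (.sub α α)
  | sTrans {α β γ} : Entails sgn load store C (.sub α β) →
      Entails sgn load store C (.sub β γ) →
      Entails sgn load store C (.sub α γ)
  | sFieldPos {α β : DTV V L} {ℓ} : Entails sgn load store C (.sub α β) →
      Entails sgn load store C (.var (β.app ℓ)) → sgn ℓ = .pos →
      Entails sgn load store C (.sub (α.app ℓ) (β.app ℓ))
  | sFieldNeg {α β : DTV V L} {ℓ} : Entails sgn load store C (.sub α β) →
      Entails sgn load store C (.var (β.app ℓ)) → sgn ℓ = .neg →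
      Entails sgn load store C (.sub (β.app ℓ) (α.app ℓ))
  | sPointer {α : DTV V L} : Entails sgn load store C (.var (α.app load)) →
      Entails sgn load store C (.var (α.app store)) →
      Entails sgn load store C (.sub (α.app store) (α.app load))

/-- `𝒞` is closed under T-Left, T-Right and T-Prefix. -/
def ClosedTLRP {V L : Type} (C : Set (Constraint V L)) : Prop :=
  (∀ α β : DTV V L, Constraint.sub α β ∈ C →
      Constraint.var α ∈ C ∧ Constraint.var β ∈ C) ∧
  (∀ (α : DTV V L) (ℓ : L), Constraint.var (α.app ℓ) ∈ C →
      Constraint.var α ∈ C)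

/-- Control states of the pushdown system `𝒫_𝒞`:
`Ṽ = ((lhs(𝒱_i) ⨿ rhs(𝒱_i) ⨿ 𝒱_u) × {⊕,⊖}) ∪ {#Start, #End}`.
`lt x a` is `(x_L)^a`, `rt x a` is `(x_R)^a`, `un x a` is `x^a` for
uninteresting `x`. -/
inductive Ctl (V : Type) : Type where
  | start : Ctl V
  | fin : Ctl V
  | lt : V → Sign → Ctl V
  | rt : V → Sign → Ctl V
  | un : V → Sign → Ctl V

/-- Stack symbols `Σ̃ = Σ ∪ {v^⊕, v^⊖ : v ∈ 𝒱_i}`. -/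
inductive StkSym (V L : Type) : Type where
  | lbl : L → StkSym V L
  | tv : V → Sign → StkSym V L

/-- A word of field labels seen as a stack word. -/
def symWord {V L : Type} (u : List L) : List (StkSym V L) :=
  u.map StkSym.lbl

/-- `lhs(x)^a`: tagged `x_L` if `x` is interesting, plain otherwise. -/
def lhsCtl {V : Type} (I : V → Bool) (x : V) (a : Sign) : Ctl V :=
  if I x then .lt x a else .un x a

/-- `rhs(x)^a`: tagged `x_R` if `x` is interesting, plain otherwise. -/
def rhsCtl {V : Type} (I : V → Bool) (x : V) (a : Sign) : Ctl V :=
  if I x then .rt x a else .un x a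

/-- A configuration of an unconstrained pushdown system: a control state
together with a stack word. -/
abbrev PDSConfig (V L : Type) : Type := Ctl V × List (StkSym V L)

/-- A transition rule `⟨X; u⟩ ↪ ⟨Y; v⟩`. -/
abbrev PDSRule (V L : Type) : Type := PDSConfig V L × PDSConfig V L

/-- `rule⊕(p.u ⊑ q.v) = ⟨lhs(p)^{⟨u⟩}; u⟩ ↪ ⟨rhs(q)^{⟨v⟩}; v⟩`. -/
def rulePos {V L : Type} (I : V → Bool) (sgn : L → Sign)
    (c : DTV V L × DTV V L) : PDSRule V L :=
  ((lhsCtl I c.1.base (wordSign sgn c.1.word), symWord c.1.word),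
   (rhsCtl I c.2.base (wordSign sgn c.2.word), symWord c.2.word))

/-- `rule⊖(p.u ⊑ q.v) = ⟨lhs(q)^{⊖·⟨v⟩}; v⟩ ↪ ⟨rhs(p)^{⊖·⟨u⟩}; u⟩`. -/
def ruleNeg {V L : Type} (I : V → Bool) (sgn : L → Sign)
    (c : DTV V L × DTV V L) : PDSRule V L :=
  ((lhsCtl I c.2.base (Sign.neg.mul (wordSign sgn c.2.word)), symWord c.2.word),
   (rhsCtl I c.1.base (Sign.neg.mul (wordSign sgn c.1.word)), symWord c.1.word))

/-- The transition rules `Δ = Δ_𝒞 ∪ Δ_ptr ∪ Δ_start ∪ Δ_end` of the pushdown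
system `𝒫_𝒞` associated to a set `𝒞` of subtype constraints between derived
type variables. -/
def Delta {V L : Type} (I : V → Bool) (sgn : L → Sign) (load store : L)
    (C : Set (DTV V L × DTV V L)) : Set (PDSRule V L) :=
  {r | ∃ c ∈ C, r = rulePos I sgn c ∨ r = ruleNeg I sgn c} ∪
  {r | ∃ v : DTV V L,
      r = rulePos I sgn (v.app store, v.app load) ∨
      r = ruleNeg I sgn (v.app store, v.app load)} ∪
  {r | ∃ (v : V) (a : Sign), I v ∧
      r = ((.start, [StkSym.tv v a]), (.lt v a, ([] : List (StkSym V L))))} ∪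
  {r | ∃ (v : V) (a : Sign), I v ∧
      r = ((.rt v a, ([] : List (StkSym V L))), (.fin, [StkSym.tv v a]))}

/-- One transition step of an unconstrained pushdown system:
`(X, w) ⟶ (Y, w')` iff there is a suffix `s` and a rule `⟨X; u⟩ ↪ ⟨Y; v⟩`
with `w = us` and `w' = vs`. -/
def PDSStep {V L : Type} (Δ : Set (PDSRule V L))
    (c c' : PDSConfig V L) : Prop :=
  ∃ r ∈ Δ, ∃ s : List (StkSym V L),
    c = (r.1.1, r.1.2 ++ s) ∧ c' = (r.2.1, r.2.2 ++ s)

/-- The reflexive-transitive closure `⟶*` of the transition relation. -/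
def PDSSteps {V L : Type} (Δ : Set (PDSRule V L)) :
    PDSConfig V L → PDSConfig V L → Prop :=
  Relation.ReflTransGen (PDSStep Δ)

/-- `Deriv(𝒫_𝒞)`, as a relation on triples `X^a u`: `X, Y` are interesting and
`(#Start, X^a u) ⟶* (#End, Y^b v)`. -/
def Deriv {V L : Type} (I : V → Bool) (sgn : L → Sign) (load store : L)
    (C : Set (DTV V L × DTV V L)) :
    (V × Sign × List L) → (V × Sign × List L) → Prop :=
  fun p q =>
    I p.1 ∧ I q.1 ∧
      PDSSteps (Delta I sgn load store C)
        (.start, StkSym.tv p.1 p.2.1 :: symWord p.2.2)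
        (.fin, StkSym.tv q.1 q.2.1 :: symWord q.2.2)

/-- `Deriv'(𝒫_𝒞) = {(X.u, Y.v) : (X^{⟨u⟩} u, Y^{⟨v⟩} v) ∈ Deriv(𝒫_𝒞)}`. -/
def Deriv' {V L : Type} (I : V → Bool) (sgn : L → Sign) (load store : L)
    (C : Set (DTV V L × DTV V L)) :
    (V × List L) → (V × List L) → Prop :=
  fun p q =>
    Deriv I sgn load store C (p.1, wordSign sgn p.2, p.2)
      (q.1, wordSign sgn q.2, q.2)

/-- Reversal of the sign of a stack symbol `v^a`; field labels are left alone. -/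
def StkSym.flip {V L : Type} : StkSym V L → StkSym V L
  | .lbl l => .lbl l
  | .tv v a => .tv v (Sign.neg.mul a)

/-- The involution on control states that exchanges `#Start` with `#End` and left
tags with right tags, and reverses signs. -/
def Ctl.flip {V : Type} : Ctl V → Ctl V
  | .start => .fin
  | .fin => .start
  | .lt v a => .rt v (Sign.neg.mul a)
  | .rt v a => .lt v (Sign.neg.mul a)
  | .un v a => .un v (Sign.neg.mul a)

/-- The involution on configurations that reverses the transition relation. -/
def flipConfig {V L : Type} (c : PDSConfig V L) : PDSConfig V L :=
  (c.1.flip, c.2.map StkSym.flip)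

theorem Sign.neg_mul_neg_mul (a : Sign) : Sign.neg.mul (Sign.neg.mul a) = a := by
  cases a <;> rfl

theorem map_flip_symWord {V L : Type} (u : List L) :
    (symWord u : List (StkSym V L)).map StkSym.flip = symWord u := by
  simp [symWord, StkSym.flip]

theorem flip_lhsCtl {V : Type} (I : V → Bool) (x : V) (a : Sign) :
    (lhsCtl I x a).flip = rhsCtl I x (Sign.neg.mul a) := by
  unfold lhsCtl rhsCtl
  split <;> rfl

theorem flip_rhsCtl {V : Type} (I : V → Bool) (x : V) (a : Sign) :
    (rhsCtl I x a).flip = lhsCtl I x (Sign.neg.mul a) := by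
  unfold lhsCtl rhsCtl
  split <;> rfl

theorem flip_rulePos {V L : Type} (I : V → Bool) (sgn : L → Sign)
    (c : DTV V L × DTV V L) :
    (flipConfig (rulePos I sgn c).2, flipConfig (rulePos I sgn c).1) =
      ruleNeg I sgn c := by
  simp [flipConfig, rulePos, ruleNeg, flip_lhsCtl, flip_rhsCtl, map_flip_symWord]

theorem flip_ruleNeg {V L : Type} (I : V → Bool) (sgn : L → Sign)
    (c : DTV V L × DTV V L) :
    (flipConfig (ruleNeg I sgn c).2, flipConfig (ruleNeg I sgn c).1) =
      rulePos I sgn c := by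
  simp [flipConfig, rulePos, ruleNeg, flip_lhsCtl, flip_rhsCtl, map_flip_symWord,
    Sign.neg_mul_neg_mul]

/-- The rules of `𝒫_𝒞` are closed under flipping both sides and exchanging them. -/
theorem flip_mem_Delta {V L : Type} {I : V → Bool} {sgn : L → Sign}
    {load store : L} {C : Set (DTV V L × DTV V L)} {r : PDSRule V L}
    (hr : r ∈ Delta I sgn load store C) :
    (flipConfig r.2, flipConfig r.1) ∈ Delta I sgn load store C := by
  rcases hr with ((⟨c, hc, rfl | rfl⟩ | ⟨v, rfl | rfl⟩) | ⟨v, a, hv, rfl⟩) |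
    ⟨v, a, hv, rfl⟩
  · exact .inl (.inl (.inl ⟨c, hc, .inr (flip_rulePos I sgn c)⟩))
  · exact .inl (.inl (.inl ⟨c, hc, .inl (flip_ruleNeg I sgn c)⟩))
  · exact .inl (.inl (.inr ⟨v, .inr (flip_rulePos I sgn _)⟩))
  · exact .inl (.inl (.inr ⟨v, .inl (flip_ruleNeg I sgn _)⟩))
  · exact .inr ⟨v, Sign.neg.mul a, hv, rfl⟩
  · exact .inl (.inr ⟨v, Sign.neg.mul a, hv, rfl⟩)

theorem PDSStep.flip {V L : Type} {I : V → Bool} {sgn : L → Sign}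
    {load store : L} {C : Set (DTV V L × DTV V L)} {c c' : PDSConfig V L}
    (h : PDSStep (Delta I sgn load store C) c c') :
    PDSStep (Delta I sgn load store C) (flipConfig c') (flipConfig c) := by
  obtain ⟨r, hr, s, rfl, rfl⟩ := h
  exact ⟨_, flip_mem_Delta hr, s.map StkSym.flip, by simp [flipConfig],
    by simp [flipConfig]⟩

theorem PDSSteps.flip {V L : Type} {I : V → Bool} {sgn : L → Sign}
    {load store : L} {C : Set (DTV V L × DTV V L)} {c c' : PDSConfig V L}
    (h : PDSSteps (Delta I sgn load store C) c c') :
    PDSSteps (Delta I sgn load store C) (flipConfig c') (flipConfig c) := by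
  induction h with
  | refl => exact .refl
  | tail _ hstep ih => exact .head hstep.flip ih

/-- if `(X^a u, Y^b v) ∈ Deriv(𝒫_𝒞)` then
`(Y^{⊖·b} v, X^{⊖·a} u) ∈ Deriv(𝒫_𝒞)`. -/
theorem deriv_symm {V L : Type} (I : V → Bool) (sgn : L → Sign)
    (load store : L) (hload : sgn load = .pos) (hstore : sgn store = .neg)
    (C : Set (DTV V L × DTV V L))
    (X Y : V) (a b : Sign) (u v : List L)
    (h : Deriv I sgn load store C (X, a, u) (Y, b, v)) :
    Deriv I sgn load store C (Y, Sign.neg.mul b, v) (X, Sign.neg.mul a, u) := by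
  obtain ⟨hX, hY, hsteps⟩ := h
  refine ⟨hY, hX, ?_⟩
  simpa [flipConfig, Ctl.flip, StkSym.flip, map_flip_symWord] using hsteps.flip
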